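/- arXiv:2508.07936 — 2 statements merged into one kernel-verified Lean document; each statement's English description precedes it below -/
import Mathlib

section
/- The left shift S on the sequence space ℝ^ℕ is ergodic with respect to μ; that is, the increment sequence of a mixed fractional Brownian motion sampled at step h is a stationary ergodic Gaussian sequence. -/
open MeasureTheory Filter Set

/-- Lag-`k` autocovariance of the unit-step increments of a fractional Brownian
motion with Hurst index `H`. -/
noncomputable def rhoH (H : ℝ) (k : ℤ) : ℝ :=
  (|(k : ℝ) + 1| ^ (2 * H) + |(k : ℝ) - 1| ^ (2 * H) - 2 * |(k : ℝ)| ^ (2 * H)) / 2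

/-- Autocovariance of the step-`h` increments of the mixed fractional Brownian
motion `σ B + γ B^H`. -/
noncomputable def mixedCov (σ γ h H : ℝ) (k : ℤ) : ℝ :=
  σ ^ 2 * h * (if k = 0 then 1 else 0) + γ ^ 2 * h ^ (2 * H) * rhoH H k

/-- Left shift on sequence space. -/
def shift : (ℕ → ℝ) → (ℕ → ℝ) := fun ω k => ω (k + 1)

/-! Write `e a` for the character `ω ↦ exp (i ∑ aₖ ωₖ)` of `ℝ^ℕ`. For a centered stationary Gaussian
law `μ`, the correlation of `e a ∘ S^n` with `e a ∘ S^k` is explicit in the covariances; when these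
tend to `0`, the correlation tends as `n → ∞` to the product of the means. In `L²(μ)` the bounded
sequence `e a ∘ S^n` therefore converges weakly to the constant `∫ e a ∂μ`: it suffices to test
against its own terms and against the limit. For an invariant set `A` the integral of `e a ∘ S^n`
over `A` does not depend on `n`, so `∫_A e a ∂μ = μ(A) ∫ e a ∂μ` for every `a`. Characters determine
finite measures, so `μ` restricted to `A` is `μ(A) μ`, and evaluating at `A` gives `μ(A) = μ(A)²`.

The covariances of the mixed increments tend to `0` because they are, up to a factor and off the
diagonal, second differences of `|x| ^ (2H)` with `2H < 2`. -/

open scoped Topology ComplexConjugate InnerProductSpace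

section WeakConvergence

variable {𝕜 E ι : Type*} [RCLike 𝕜] [NormedAddCommGroup E] [InnerProductSpace 𝕜 E]
  {l : Filter ι} {u : ι → E} {w : E} {C : ℝ}

lemma isClosed_setOf_tendsto_inner (hC : ∀ n, ‖u n‖ ≤ C) :
    IsClosed {v : E | Tendsto (fun n ↦ ⟪v, u n⟫_𝕜) l (𝓝 ⟪v, w⟫_𝕜)} := by
  refine Equicontinuous.isClosed_setOfPred_tendsto ?_ (by fun_prop)
  refine (LipschitzWith.uniformEquicontinuous _ C.toNNReal fun n ↦ ?_).equicontinuous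
  refine LipschitzWith.of_dist_le_mul fun v v' ↦ ?_
  calc dist ⟪v, u n⟫_𝕜 ⟪v', u n⟫_𝕜 = ‖⟪v - v', u n⟫_𝕜‖ := by rw [dist_eq_norm, inner_sub_left]
    _ ≤ ‖v - v'‖ * ‖u n‖ := norm_inner_le_norm _ _
    _ ≤ C.toNNReal * dist v v' := by
      rw [dist_eq_norm, mul_comm]
      gcongr
      exact (hC n).trans C.le_coe_toNNReal

theorem tendsto_inner_of_tendsto_inner_self [CompleteSpace E] (hC : ∀ n, ‖u n‖ ≤ C)
    (hu : ∀ k, Tendsto (fun n ↦ ⟪u k, u n⟫_𝕜) l (𝓝 ⟪u k, w⟫_𝕜))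
    (hw : Tendsto (fun n ↦ ⟪w, u n⟫_𝕜) l (𝓝 ⟪w, w⟫_𝕜)) (v : E) :
    Tendsto (fun n ↦ ⟪v, u n⟫_𝕜) l (𝓝 ⟪v, w⟫_𝕜) := by
  -- The good `v` form a closed subspace `W`, which contains both the closed span `K` of `w` and the
  -- `u k`, by hypothesis, and `Kᗮ`, where every inner product vanishes.
  let W : Submodule 𝕜 E :=
    { carrier := {v | Tendsto (fun n ↦ ⟪v, u n⟫_𝕜) l (𝓝 ⟪v, w⟫_𝕜)}
      add_mem' := fun hx hy ↦ by simpa [inner_add_left] using hx.add hy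
      zero_mem' := by simp [tendsto_const_nhds]
      smul_mem' := fun r x hx ↦ by simpa [inner_smul_left] using hx.const_mul (conj r) }
  let K : Submodule 𝕜 E := (Submodule.span 𝕜 (insert w (range u))).topologicalClosure
  have mem_K {x : E} (hx : x ∈ insert w (range u)) : x ∈ K :=
    Submodule.le_topologicalClosure _ (Submodule.subset_span hx)
  have hKW : K ≤ W := by
    refine Submodule.topologicalClosure_minimal _ (Submodule.span_le.2 ?_)
      (isClosed_setOf_tendsto_inner hC)
    rintro x (rfl | ⟨k, rfl⟩)
    exacts [hw, hu k]
  have hKorthW : Kᗮ ≤ W := fun x hx ↦ by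
    have hxu (n : ι) : ⟪x, u n⟫_𝕜 = 0 :=
      K.inner_left_of_mem_orthogonal (mem_K (mem_insert_of_mem w (mem_range_self n))) hx
    have hxw : ⟪x, w⟫_𝕜 = 0 := K.inner_left_of_mem_orthogonal (mem_K (mem_insert w _)) hx
    change Tendsto (fun n ↦ ⟪x, u n⟫_𝕜) l (𝓝 ⟪x, w⟫_𝕜)
    simp only [hxu, hxw, tendsto_const_nhds]
  have : CompleteSpace K := (Submodule.isClosed_topologicalClosure _).completeSpace_coe
  have hv : v ∈ K ⊔ Kᗮ := by simp [Submodule.sup_orthogonal_of_hasOrthogonalProjection]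
  exact sup_le hKW hKorthW hv

end WeakConvergence

section SquareIntegrable

variable {Ω 𝕜 ι : Type*} {mΩ : MeasurableSpace Ω} {μ : Measure Ω} [RCLike 𝕜]

lemma inner_toLp_eq_integral {f g : Ω → 𝕜} (hf : MemLp f 2 μ) (hg : MemLp g 2 μ) :
    ⟪hf.toLp f, hg.toLp g⟫_𝕜 = ∫ ω, g ω * conj (f ω) ∂μ := by
  refine integral_congr_ae ?_
  filter_upwards [hf.coeFn_toLp, hg.coeFn_toLp] with ω hfω hgω
  rw [hfω, hgω, RCLike.inner_apply]

theorem tendsto_setIntegral_of_tendsto_integral_mul_conj [IsFiniteMeasure μ] {l : Filter ι}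
    {f : ι → Ω → 𝕜} {m : 𝕜} {C : NNReal} (hf : ∀ n, MemLp (f n) 2 μ)
    (hC : ∀ n, eLpNorm (f n) 2 μ ≤ C)
    (hmean : Tendsto (fun n ↦ ∫ ω, f n ω ∂μ) l (𝓝 (μ.real univ * m)))
    (hcorr : ∀ k, Tendsto (fun n ↦ ∫ ω, f n ω * conj (f k ω) ∂μ) l
      (𝓝 (m * conj (∫ ω, f k ω ∂μ)))) {A : Set Ω} (hA : MeasurableSet A) :
    Tendsto (fun n ↦ ∫ ω in A, f n ω ∂μ) l (𝓝 (μ.real A * m)) := by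
  have hm : MemLp (fun _ : Ω ↦ m) 2 μ := memLp_const m
  have inner_indicator {g : Ω → 𝕜} (hg : MemLp g 2 μ) :
      ⟪indicatorConstLp 2 hA (measure_ne_top μ A) (1 : 𝕜), hg.toLp g⟫_𝕜 = ∫ ω in A, g ω ∂μ := by
    rw [L2.inner_indicatorConstLp_one]
    exact integral_congr_ae (ae_restrict_of_ae hg.coeFn_toLp)
  have hweak := tendsto_inner_of_tendsto_inner_self (𝕜 := 𝕜) (l := l) (w := hm.toLp)
    (u := fun n ↦ (hf n).toLp) (C := C) (fun n ↦ ?_) (fun k ↦ ?_) ?_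
    (indicatorConstLp 2 hA (measure_ne_top μ A) (1 : 𝕜))
  · simpa only [inner_indicator, setIntegral_const, RCLike.real_smul_eq_coe_mul] using hweak
  · rw [Lp.norm_toLp]
    exact ENNReal.toReal_le_of_le_ofReal C.coe_nonneg (by simpa using hC n)
  · simpa only [inner_toLp_eq_integral, integral_const_mul, integral_conj] using hcorr k
  · simp only [inner_toLp_eq_integral, integral_mul_const, integral_const,
      RCLike.real_smul_eq_coe_mul]
    simpa only [mul_assoc] using hmean.mul_const (conj m)

end SquareIntegrable

section Ergodicity

variable {Ω : Type*} {mΩ : MeasurableSpace Ω} {μ : Measure Ω} {T : Ω → Ω}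

lemma setIntegral_comp_of_preimage_eq {E : Type*} [NormedAddCommGroup E] [NormedSpace ℝ E]
    (hT : MeasurePreserving T μ μ) {A : Set Ω} (hA : MeasurableSet A) (hTA : T ⁻¹' A = A)
    {f : Ω → E} (hf : AEStronglyMeasurable f μ) :
    ∫ ω in A, f (T ω) ∂μ = ∫ ω in A, f ω ∂μ := by
  have hTr : MeasurePreserving T (μ.restrict A) (μ.restrict A) := by
    simpa only [hTA] using hT.restrict_preimage hA
  conv_rhs => rw [← hTr.map_eq]
  exact (integral_map hTr.aemeasurable (hTr.map_eq.symm ▸ hf.restrict)).symm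

lemma preErgodic_of_restrict_eq_smul [IsProbabilityMeasure μ]
    (h : ∀ A, MeasurableSet A → T ⁻¹' A = A → μ.restrict A = μ A • μ) : PreErgodic T μ where
  aeconst_set A hA hTA := by
    have hindep : ProbabilityTheory.IndepSet A A μ := by
      rw [ProbabilityTheory.indepSet_iff_measure_inter_eq_mul hA hA μ]
      simpa [Measure.restrict_apply hA] using congrArg (· A) (h A hA hTA)
    rw [eventuallyConst_set', ae_eq_empty, ae_eq_univ, prob_compl_eq_zero_iff hA]
    exact ProbabilityTheory.measure_eq_zero_or_one_of_indepSet_self hindep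

end Ergodicity

section Characters

variable {ι : Type*}

/-- The character `ω ↦ exp (i ∑ aₖ ωₖ)` of the product space `ℝ^ι` attached to a finitely supported
frequency `a`. -/
noncomputable def piChar (a : ι →₀ ℝ) (ω : ι → ℝ) : ℂ :=
  Complex.exp (Finsupp.linearCombination ℝ ω a * Complex.I)

lemma piChar_sub (a b : ι →₀ ℝ) (ω : ι → ℝ) :
    piChar (a - b) ω = piChar a ω * conj (piChar b ω) := by
  simp only [piChar, ← Complex.exp_conj, ← Complex.exp_add, map_sub, map_mul, Complex.conj_ofReal,
    Complex.conj_I]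
  push_cast
  ring_nf

lemma norm_piChar (a : ι →₀ ℝ) (ω : ι → ℝ) : ‖piChar a ω‖ = 1 :=
  Complex.norm_exp_ofReal_mul_I _

lemma measurable_linearCombination (a : ι →₀ ℝ) :
    Measurable fun ω : ι → ℝ ↦ Finsupp.linearCombination ℝ ω a := by
  simp only [Finsupp.linearCombination_apply, Finsupp.sum, smul_eq_mul]
  fun_prop

lemma measurable_piChar (a : ι →₀ ℝ) : Measurable (piChar a) := by
  have := measurable_linearCombination a
  unfold piChar
  fun_prop

lemma integral_piChar_eq_charFun (μ : Measure (ι → ℝ)) (a : ι →₀ ℝ) :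
    ∫ ω, piChar a ω ∂μ = charFun (μ.map fun ω ↦ Finsupp.linearCombination ℝ ω a) 1 := by
  rw [charFun_apply_real,
    integral_map (measurable_linearCombination a).aemeasurable (by fun_prop)]
  simp [piChar]

lemma exists_linearCombination_eq_strongDual_restrict (I : Finset ι)
    (L : StrongDual ℝ (I → ℝ)) :
    ∃ a : ι →₀ ℝ, ∀ ω, L (I.restrict ω) = Finsupp.linearCombination ℝ ω a := by
  classical
  refine ⟨∑ i : I, Finsupp.single (i : ι) (L (Pi.single i 1)), fun ω ↦ ?_⟩
  have hω : I.restrict ω = ∑ i : I, ω i • (Pi.single i 1 : I → ℝ) := pi_eq_sum_univ' _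
  simp [hω, mul_comm]

theorem measure_ext_of_integral_piChar {μ ν : Measure (ι → ℝ)} [IsFiniteMeasure μ]
    [IsFiniteMeasure ν] (h : ∀ a, ∫ ω, piChar a ω ∂μ = ∫ ω, piChar a ω ∂ν) : μ = ν := by
  have hmarginal (I : Finset ι) : μ.map I.restrict = ν.map I.restrict := by
    refine Measure.ext_of_charFunDual (funext fun L ↦ ?_)
    obtain ⟨a, ha⟩ := exists_linearCombination_eq_strongDual_restrict I L
    rw [charFunDual_apply, charFunDual_apply,
      integral_map (Finset.measurable_restrict I).aemeasurable (by fun_prop),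
      integral_map (Finset.measurable_restrict I).aemeasurable (by fun_prop)]
    simpa only [ha, piChar] using h a
  exact IsProjectiveLimit.unique (P := fun I ↦ ν.map I.restrict) hmarginal fun _ ↦ rfl

end Characters

section Translation

/-- Translation of finitely supported sequences by `n` to the right, the transpose of
`shift^[n]`. -/
noncomputable def shiftRight (n : ℕ) : (ℕ →₀ ℝ) →ₗ[ℝ] (ℕ →₀ ℝ) :=
  Finsupp.lmapDomain ℝ ℝ (· + n)

lemma shift_iterate_apply (n : ℕ) (ω : ℕ → ℝ) (k : ℕ) : shift^[n] ω k = ω (k + n) := by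
  induction n generalizing ω with
  | zero => rfl
  | succ n ih => rw [Function.iterate_succ_apply, ih, shift, add_assoc]

lemma measurable_shift : Measurable shift :=
  measurable_pi_lambda _ fun k ↦ measurable_pi_apply (k + 1)

lemma piChar_shift_iterate (n : ℕ) (a : ℕ →₀ ℝ) (ω : ℕ → ℝ) :
    piChar a (shift^[n] ω) = piChar (shiftRight n a) ω := by
  have hshift : shift^[n] ω = ω ∘ (· + n) := funext (shift_iterate_apply n ω)
  simp only [piChar, shiftRight, Finsupp.lmapDomain_apply, Finsupp.linearCombination_mapDomain,
    hshift]

/-- The bilinear form `(a, b) ↦ ∑ aᵢ bⱼ c(i - j)` on finitely supported sequences: the covariance of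
`∑ aᵢ ωᵢ` and `∑ bⱼ ωⱼ` when `c` is the autocovariance of the sequence `ω`. -/
noncomputable def covForm (c : ℤ → ℝ) : (ℕ →₀ ℝ) →ₗ[ℝ] (ℕ →₀ ℝ) →ₗ[ℝ] ℝ :=
  Finsupp.linearCombination ℝ fun i : ℕ ↦ Finsupp.linearCombination ℝ fun j : ℕ ↦ c (i - j)

variable {c : ℤ → ℝ}

lemma covForm_apply (c : ℤ → ℝ) (a b : ℕ →₀ ℝ) :
    covForm c a b = a.sum fun i x ↦ b.sum fun j y ↦ x * y * c (i - j) := by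
  simp [covForm, Finsupp.linearCombination_apply, Finsupp.sum, Finset.mul_sum, mul_assoc]

lemma covForm_swap (c : ℤ → ℝ) (a b : ℕ →₀ ℝ) : covForm c a b = covForm (fun k ↦ c (-k)) b a := by
  simp only [covForm_apply, neg_sub]
  rw [Finsupp.sum_comm]
  simp [mul_comm]

lemma covForm_shiftRight_left (c : ℤ → ℝ) (n : ℕ) (a b : ℕ →₀ ℝ) :
    covForm c (shiftRight n a) b = covForm (fun k ↦ c (k + n)) a b := by
  simp [covForm, shiftRight, Finsupp.linearCombination_mapDomain, Function.comp_def,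
    add_sub_right_comm]

lemma covForm_shiftRight_shiftRight (c : ℤ → ℝ) (n : ℕ) (a b : ℕ →₀ ℝ) :
    covForm c (shiftRight n a) (shiftRight n b) = covForm c a b := by
  rw [covForm_shiftRight_left, covForm_swap, covForm_shiftRight_left, covForm_swap]
  simp

lemma tendsto_covForm {ι : Type*} {l : Filter ι} {c : ι → ℤ → ℝ}
    (hc : ∀ k, Tendsto (fun n ↦ c n k) l (𝓝 0)) (a b : ℕ →₀ ℝ) :
    Tendsto (fun n ↦ covForm (c n) a b) l (𝓝 0) := by
  simp only [covForm_apply, Finsupp.sum]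
  simpa using tendsto_finsetSum _ fun (i : ℕ) _ ↦
    tendsto_finsetSum _ fun (j : ℕ) _ ↦ (hc (i - j)).const_mul (a i * b j)

lemma tendsto_covForm_shiftRight_left (hc : Tendsto c cofinite (𝓝 0)) (a b : ℕ →₀ ℝ) :
    Tendsto (fun n ↦ covForm c (shiftRight n a) b) atTop (𝓝 0) := by
  simp only [covForm_shiftRight_left]
  refine tendsto_covForm (fun k ↦ hc.comp ?_) a b
  rw [← Nat.cofinite_eq_atTop]
  exact ((add_right_injective k).comp Nat.cast_injective).tendsto_cofinite

lemma tendsto_covForm_shiftRight_right (hc : Tendsto c cofinite (𝓝 0)) (a b : ℕ →₀ ℝ) :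
    Tendsto (fun n ↦ covForm c a (shiftRight n b)) atTop (𝓝 0) := by
  simp only [covForm_swap c a]
  exact tendsto_covForm_shiftRight_left (hc.comp neg_injective.tendsto_cofinite) b a

lemma tendsto_covForm_shiftRight_sub_shiftRight (hc : Tendsto c cofinite (𝓝 0)) (a : ℕ →₀ ℝ)
    (k : ℕ) :
    Tendsto (fun n ↦ covForm c (shiftRight n a - shiftRight k a) (shiftRight n a - shiftRight k a))
      atTop (𝓝 (2 * covForm c a a)) := by
  have hlim := ((tendsto_covForm_shiftRight_right hc (shiftRight k a) a).add
    (tendsto_covForm_shiftRight_left hc a (shiftRight k a))).const_sub (2 * covForm c a a)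
  simp only [add_zero, sub_zero] at hlim
  refine hlim.congr fun n ↦ ?_
  simp only [map_sub, LinearMap.sub_apply, covForm_shiftRight_shiftRight]
  ring

end Translation

/-- `μ` is the law of a centered stationary Gaussian sequence with autocovariance `c`. The
variance is written with `Real.toNNReal`, which truncates negative numbers to `0`. -/
def IsStationaryGaussian (μ : Measure (ℕ → ℝ)) (c : ℤ → ℝ) : Prop :=
  ∀ (n : ℕ) (a : Fin n → ℝ), μ.map (fun ω ↦ ∑ k : Fin n, a k * ω k) =
    ProbabilityTheory.gaussianReal 0
      (∑ i : Fin n, ∑ j : Fin n, a i * a j * c ((i : ℤ) - (j : ℤ))).toNNReal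

namespace IsStationaryGaussian

variable {μ : Measure (ℕ → ℝ)} {c : ℤ → ℝ}

lemma map_linearCombination (h : IsStationaryGaussian μ c) (a : ℕ →₀ ℝ) :
    μ.map (fun ω ↦ Finsupp.linearCombination ℝ ω a) =
      ProbabilityTheory.gaussianReal 0 (covForm c a a).toNNReal := by
  obtain ⟨N, hN⟩ := a.support.exists_nat_subset_range
  have sum_eq (g : ℕ → ℝ → ℝ) (hg : ∀ i, g i 0 = 0) : a.sum g = ∑ k : Fin N, g k (a k) := by
    rw [Finsupp.sum_of_support_subset a hN g fun i _ ↦ hg i, Finset.sum_range]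
  simpa [Finsupp.linearCombination_apply, covForm_apply, sum_eq] using h N fun k ↦ a k

lemma integral_piChar (h : IsStationaryGaussian μ c) (a : ℕ →₀ ℝ) :
    ∫ ω, piChar a ω ∂μ = Real.exp (-(covForm c a a).toNNReal / 2) := by
  rw [integral_piChar_eq_charFun, h.map_linearCombination, ProbabilityTheory.charFun_gaussianReal]
  simp [neg_div]

lemma integral_piChar_shiftRight (h : IsStationaryGaussian μ c) (n : ℕ) (a : ℕ →₀ ℝ) :
    ∫ ω, piChar (shiftRight n a) ω ∂μ = ∫ ω, piChar a ω ∂μ := by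
  rw [h.integral_piChar, h.integral_piChar, covForm_shiftRight_shiftRight]

theorem measurePreserving_shift [IsFiniteMeasure μ] (h : IsStationaryGaussian μ c) :
    MeasurePreserving shift μ μ := by
  refine ⟨measurable_shift, measure_ext_of_integral_piChar fun a ↦ ?_⟩
  rw [integral_map measurable_shift.aemeasurable (measurable_piChar a).aestronglyMeasurable,
    ← h.integral_piChar_shiftRight 1 a]
  exact integral_congr_ae (ae_of_all _ (piChar_shift_iterate 1 a))

lemma tendsto_integral_piChar_mul_conj (h : IsStationaryGaussian μ c)
    (hc : Tendsto c cofinite (𝓝 0)) (a : ℕ →₀ ℝ) (k : ℕ) :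
    Tendsto (fun n ↦ ∫ ω, piChar (shiftRight n a) ω * conj (piChar (shiftRight k a) ω) ∂μ) atTop
      (𝓝 ((∫ ω, piChar a ω ∂μ) * conj (∫ ω, piChar (shiftRight k a) ω ∂μ))) := by
  have hlimit : (∫ ω, piChar a ω ∂μ) * conj (∫ ω, piChar (shiftRight k a) ω ∂μ) =
      Real.exp (-(2 * covForm c a a).toNNReal / 2) := by
    rw [h.integral_piChar_shiftRight, h.integral_piChar, Complex.conj_ofReal, ← Complex.ofReal_mul,
      ← Real.exp_add, Real.toNNReal_mul zero_le_two, Real.toNNReal_ofNat]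
    push_cast
    ring_nf
  have hcont : Continuous fun q : ℝ ↦ (Real.exp (-q.toNNReal / 2) : ℂ) := by fun_prop
  rw [hlimit]
  simp only [← piChar_sub, h.integral_piChar]
  exact (hcont.tendsto _).comp (tendsto_covForm_shiftRight_sub_shiftRight hc a k)

theorem tendsto_setIntegral_piChar_shiftRight [IsProbabilityMeasure μ]
    (h : IsStationaryGaussian μ c) (hc : Tendsto c cofinite (𝓝 0)) {A : Set (ℕ → ℝ)}
    (hA : MeasurableSet A) (a : ℕ →₀ ℝ) :
    Tendsto (fun n ↦ ∫ ω in A, piChar (shiftRight n a) ω ∂μ) atTop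
      (𝓝 (μ.real A * ∫ ω, piChar a ω ∂μ)) := by
  have hbound (n : ℕ) : ∀ᵐ ω ∂μ, ‖piChar (shiftRight n a) ω‖ ≤ 1 :=
    ae_of_all _ fun ω ↦ (norm_piChar _ ω).le
  refine tendsto_setIntegral_of_tendsto_integral_mul_conj (C := 1)
    (fun n ↦ .of_bound (measurable_piChar _).aestronglyMeasurable 1 (hbound n))
    (fun n ↦ by simpa using eLpNorm_le_of_ae_bound (p := 2) (hbound n)) ?_
    (h.tendsto_integral_piChar_mul_conj hc a) hA
  simp [h.integral_piChar_shiftRight]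

theorem setIntegral_piChar_of_preimage_eq [IsProbabilityMeasure μ]
    (h : IsStationaryGaussian μ c) (hc : Tendsto c cofinite (𝓝 0)) {A : Set (ℕ → ℝ)}
    (hA : MeasurableSet A) (hSA : shift ⁻¹' A = A) (a : ℕ →₀ ℝ) :
    ∫ ω in A, piChar a ω ∂μ = μ.real A * ∫ ω, piChar a ω ∂μ := by
  refine tendsto_nhds_unique (tendsto_const_nhds.congr fun n ↦ ?_)
    (h.tendsto_setIntegral_piChar_shiftRight hc hA a)
  simp only [← piChar_shift_iterate]
  exact (setIntegral_comp_of_preimage_eq (h.measurePreserving_shift.iterate n) hA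
    (Function.IsFixedPt.preimage_iterate hSA n) (measurable_piChar a).aestronglyMeasurable).symm

end IsStationaryGaussian

section Covariance

lemma tendsto_comp_add_sub_of_tendsto_deriv {E : Type*} [NormedAddCommGroup E] [NormedSpace ℝ E]
    {f f' : ℝ → E} (hf : ∀ᶠ x in atTop, HasDerivAt f (f' x) x) (hf' : Tendsto f' atTop (𝓝 0))
    (s : ℝ) : Tendsto (fun x ↦ f (x + s) - f x) atTop (𝓝 0) := by
  refine NormedAddGroup.tendsto_nhds_zero.2 fun ε hε ↦ ?_
  have hδ : 0 < ε / (|s| + 1) := by positivity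
  obtain ⟨X, hX⟩ := eventually_atTop.1 (hf.and (NormedAddGroup.tendsto_nhds_zero.1 hf' _ hδ))
  filter_upwards [eventually_ge_atTop X, eventually_ge_atTop (X - s)] with x hx hxs
  calc ‖f (x + s) - f x‖ ≤ ε / (|s| + 1) * ‖x + s - x‖ :=
        (convex_Ici X).norm_image_sub_le_of_norm_hasDerivWithin_le
          (fun y hy ↦ (hX y hy).1.hasDerivWithinAt) (fun y hy ↦ (hX y hy).2.le) hx
          (sub_le_iff_le_add.1 hxs)
    _ = ε * (|s| / (|s| + 1)) := by rw [add_sub_cancel_left, Real.norm_eq_abs]; ring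
    _ < ε := mul_lt_of_lt_one_right hε (by rw [div_lt_one (by positivity)]; exact lt_add_one _)

lemma tendsto_secondDifference_rpow {p : ℝ} (hp : p < 2) :
    Tendsto (fun x : ℝ ↦ (x + 1) ^ p + (x - 1) ^ p - 2 * x ^ p) atTop (𝓝 0) := by
  have hasDerivAt_rpow (q : ℝ) {x : ℝ} (hx : 0 < x) :
      HasDerivAt (fun t ↦ t ^ q) (q * x ^ (q - 1)) x := Real.hasDerivAt_rpow_const (.inl hx.ne')
  have hpow : Tendsto (fun x : ℝ ↦ (p - 1) * x ^ (p - 1 - 1)) atTop (𝓝 0) := by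
    have := tendsto_rpow_neg_atTop (y := 2 - p) (by linarith)
    convert this.const_mul (p - 1) using 2
    · ring_nf
    · rw [mul_zero]
  have hfirst : Tendsto (fun x : ℝ ↦ p * ((x + 1) ^ (p - 1) - x ^ (p - 1))) atTop (𝓝 0) := by
    rw [← mul_zero p]
    refine (tendsto_comp_add_sub_of_tendsto_deriv (f := (· ^ (p - 1))) ?_ hpow 1).const_mul p
    filter_upwards [eventually_gt_atTop 0] with x hx using hasDerivAt_rpow (p - 1) hx
  have hderiv : ∀ᶠ x : ℝ in atTop, HasDerivAt (fun t ↦ (t + 1) ^ p - t ^ p)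
      (p * ((x + 1) ^ (p - 1) - x ^ (p - 1))) x := by
    filter_upwards [eventually_gt_atTop 0] with x hx
    rw [mul_sub]
    exact ((hasDerivAt_rpow p (by positivity)).comp_add_const x 1).sub (hasDerivAt_rpow p hx)
  rw [← neg_zero]
  refine (tendsto_comp_add_sub_of_tendsto_deriv hderiv hfirst (-1)).neg.congr fun x ↦ ?_
  rw [neg_add_cancel_right, ← sub_eq_add_neg]
  ring

lemma rhoH_neg (H : ℝ) (k : ℤ) : rhoH H (-k) = rhoH H k := by
  have hadd : |-(k : ℝ) + 1| = |(k : ℝ) - 1| := by rw [← abs_neg]; ring_nf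
  have hsub : |-(k : ℝ) - 1| = |(k : ℝ) + 1| := by rw [← abs_neg]; ring_nf
  simp only [rhoH, Int.cast_neg, hadd, hsub, abs_neg, add_comm]

lemma tendsto_rhoH_cofinite {H : ℝ} (hH : H < 1) : Tendsto (rhoH H) cofinite (𝓝 0) := by
  have htop : Tendsto (rhoH H) atTop (𝓝 0) := by
    have hlim := ((tendsto_secondDifference_rpow (p := 2 * H) (by linarith)).div_const 2).comp
      (tendsto_intCast_atTop_atTop (R := ℝ))
    rw [zero_div] at hlim
    refine hlim.congr' ?_
    filter_upwards [eventually_ge_atTop 1] with k hk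
    have hk' : (1 : ℝ) ≤ k := by exact_mod_cast hk
    rw [rhoH, abs_of_nonneg (by linarith), abs_of_nonneg (by linarith), abs_of_nonneg (by linarith)]
    rfl
  rw [Int.cofinite_eq]
  exact ((htop.comp tendsto_neg_atBot_atTop).congr (rhoH_neg H)).sup htop

lemma tendsto_mixedCov_cofinite (σ γ h : ℝ) {H : ℝ} (hH : H < 1) :
    Tendsto (mixedCov σ γ h H) cofinite (𝓝 0) := by
  have hlim := (tendsto_rhoH_cofinite hH).const_mul (γ ^ 2 * h ^ (2 * H))
  rw [mul_zero] at hlim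
  refine hlim.congr' ?_
  filter_upwards [eventually_cofinite_ne 0] with k hk
  simp [mixedCov, hk]

end Covariance

theorem shift_ergodic_of_mixedFBM_increments_general {μ : Measure (ℕ → ℝ)}
    [IsProbabilityMeasure μ] {c : ℤ → ℝ} (hμ : IsStationaryGaussian μ c)
    (hc : Tendsto c cofinite (𝓝 0)) : Ergodic shift μ where
  toMeasurePreserving := hμ.measurePreserving_shift
  toPreErgodic := preErgodic_of_restrict_eq_smul fun A hA hSA ↦ by
    have : IsFiniteMeasure (μ A • μ) := μ.smul_finite (measure_ne_top μ A)
    refine measure_ext_of_integral_piChar fun a ↦ ?_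
    rw [hμ.setIntegral_piChar_of_preimage_eq hc hA hSA, integral_smul_measure,
      Complex.real_smul, Measure.real]

/-- The left shift `S` on `ℝ^ℕ` is ergodic with respect to `μ`: the increment
sequence of a mixed fractional Brownian motion sampled at step `h` is a
stationary ergodic Gaussian sequence. -/
theorem shift_ergodic_of_mixedFBM_increments
    (σ γ h H : ℝ) (hσ : 0 < σ) (hγ : 0 < γ) (hh : 0 < h)
    (hH : H ∈ Set.Ioo (1/2 : ℝ) 1)
    (μ : Measure (ℕ → ℝ)) [IsProbabilityMeasure μ]
    (hinv : MeasurePreserving shift μ μ)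
    (hgauss : ∀ (n : ℕ) (a : Fin n → ℝ),
      Measure.map (fun ω : ℕ → ℝ => ∑ k : Fin n, a k * ω (k : ℕ)) μ =
        ProbabilityTheory.gaussianReal 0
          (Real.toNNReal (∑ i : Fin n, ∑ j : Fin n,
            a i * a j * mixedCov σ γ h H ((i : ℤ) - (j : ℤ))))) :
    Ergodic shift μ :=
  shift_ergodic_of_mixedFBM_increments_general hgauss (tendsto_mixedCov_cofinite σ γ h hH.2)
end

section
/- There exists a constant C > 0 (depending only on F) such that for all integers m ≥ 1, sup_{x∈[−1,1]} |Σ_{j,l=1}^m (min(F(x_j), F(x_l)) − F(x_j)F(x_l)) 𝓛_j(x) 𝓛_l(x) − F(x)(1 − F(x))| ≤ C m^{−1/2}. -/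
open Filter Set Finset Real

noncomputable def chebNode (m j : ℕ) : ℝ :=
  Real.cos ((2 * (j : ℝ) - 1) * Real.pi / (2 * (m : ℝ)))

noncomputable def chebT (m : ℕ) (x : ℝ) : ℝ := Real.cos ((m : ℝ) * Real.arccos x)

noncomputable def lagBasis (m j : ℕ) (x : ℝ) : ℝ :=
  ∏ i ∈ (Finset.Icc 1 m).erase j, (x - chebNode m i) / (chebNode m j - chebNode m i)

/-!
Fix `x = cos t` and let `κ` index a node angle `θ_κ` nearest to `t`. In the barycentric form
`𝓛_i(x) = (-1)^i sin θ_i cos (m t) / (m (cos t - cos θ_i))` the signs alternate and the moduli are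
monotone on each side of `t`. Hence each partial sum `P_n = ∑_{i < n} 𝓛_i(x)` differs from the step
`1[κ < n]` by at most the basis function at the cut, which is `O(1 / |n - κ - 1/2|)`; the same
follows for `P_n ^ 2`.

The nodes decrease, so `min (F x_i) (F x_j) = F x_{max i j}` and the `min` part of the kernel
collapses to `∑ F(x_i) (P_{i+1}^2 - P_i^2)`, while the product part is the square of
`∑ F(x_i) (P_{i+1} - P_i)`. Summation by parts, the Lipschitz bound and the harmonic sum over `n`
place both sums within `O((1 + log m) / m)` of `F x`.
-/

section Summation

theorem sum_Icc_one_eq_sum_range {M : Type*} [AddCommMonoid M] (f : ℕ → M) (m : ℕ) :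
    ∑ j ∈ Finset.Icc 1 m, f j = ∑ i ∈ Finset.range m, f (i + 1) := by
  rw [Finset.range_eq_Ico, Finset.sum_Ico_add' f 0 m 1, zero_add]
  rfl

theorem sum_sum_max_mul_mul {R : Type*} [CommRing R] (f w : ℕ → R) (m : ℕ) :
    ∑ i ∈ Finset.range m, ∑ j ∈ Finset.range m, f (max i j) * w i * w j =
      ∑ i ∈ Finset.range m, f i *
        ((∑ j ∈ Finset.range (i + 1), w j) ^ 2 - (∑ j ∈ Finset.range i, w j) ^ 2) := by
  induction m with
  | zero => simp only [Finset.range_zero, Finset.sum_empty]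
  | succ m ih =>
    have last_column : ∑ i ∈ Finset.range m, f (max i m) * w i * w m =
        f m * (∑ i ∈ Finset.range m, w i) * w m := by
      rw [Finset.mul_sum, Finset.sum_mul]
      refine Finset.sum_congr rfl fun i hi => ?_
      rw [max_eq_right (Finset.mem_range.1 hi).le]
    have last_row : ∑ j ∈ Finset.range m, f (max m j) * w m * w j =
        f m * (∑ i ∈ Finset.range m, w i) * w m := by
      rw [Finset.mul_sum, Finset.sum_mul]
      refine Finset.sum_congr rfl fun j hj => ?_
      rw [max_eq_left (Finset.mem_range.1 hj).le]
      ring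
    simp only [Finset.sum_range_succ _ m, Finset.sum_add_distrib, ih, last_column, last_row,
      max_self]
    ring

theorem abs_sum_mul_sub_le_mul_sum_abs {f w : ℕ → ℝ} {m κ : ℕ} {D : ℝ} (hκ : κ < m)
    (hw : ∑ i ∈ Finset.range m, w i = 1) (hf : ∀ i, |f (i + 1) - f i| ≤ D) :
    |∑ i ∈ Finset.range m, f i * w i - f κ| ≤
      D * ∑ n ∈ Finset.range m, |∑ i ∈ Finset.range n, w i - if κ < n then 1 else 0| := by
  have hD : 0 ≤ D := (abs_nonneg _).trans (hf 0)
  set v : ℕ → ℝ := fun i => w i - if κ = i then 1 else 0 with hv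
  have sum_v (n : ℕ) :
      ∑ i ∈ Finset.range n, v i = ∑ i ∈ Finset.range n, w i - if κ < n then 1 else 0 := by
    simp only [hv, Finset.sum_sub_distrib, Finset.sum_ite_eq, Finset.mem_range]
  have sum_mul_v : ∑ i ∈ Finset.range m, f i * w i - f κ = ∑ i ∈ Finset.range m, f i • v i := by
    simp only [hv, smul_eq_mul, mul_sub, Finset.sum_sub_distrib, mul_ite, mul_one, mul_zero,
      Finset.sum_ite_eq, Finset.mem_range, hκ, if_true]
  rw [sum_mul_v, Finset.sum_range_by_parts, sum_v m, hw, if_pos hκ, sub_self, smul_zero, zero_sub,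
    abs_neg]
  obtain ⟨n, rfl⟩ := Nat.exists_eq_add_of_lt (Nat.zero_lt_of_lt hκ)
  rw [zero_add, Nat.add_sub_cancel]
  calc |∑ i ∈ Finset.range n, (f (i + 1) - f i) • ∑ j ∈ Finset.range (i + 1), v j|
    _ ≤ ∑ i ∈ Finset.range n, D * |∑ j ∈ Finset.range (i + 1), v j| := by
      refine (Finset.abs_sum_le_sum_abs _ _).trans (Finset.sum_le_sum fun i _ => ?_)
      rw [smul_eq_mul, abs_mul]
      gcongr
      exact hf i
    _ ≤ D * ∑ i ∈ Finset.range (n + 1), |∑ j ∈ Finset.range i, v j| := by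
      rw [← Finset.mul_sum, Finset.sum_range_succ']
      gcongr
      exact le_add_of_nonneg_right (abs_nonneg _)
    _ = _ := by simp only [sum_v]

theorem abs_sum_Ico_neg_one_pow_mul_le_of_monotoneOn {a : ℕ → ℝ} {j n : ℕ} (hjn : j ≤ n)
    (ha : MonotoneOn a (Set.Icc j n)) (h₀ : 0 ≤ a j) :
    |∑ i ∈ Finset.Ico j (n + 1), (-1) ^ i * a i| ≤ a n := by
  suffices h : (-1) ^ n * ∑ i ∈ Finset.Ico j (n + 1), (-1) ^ i * a i ∈ Set.Icc 0 (a n) by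
    have := abs_of_nonneg h.1
    rw [abs_mul, abs_neg_one_pow, one_mul] at this
    exact this.trans_le h.2
  induction n, hjn using Nat.le_induction with
  | base => simp [← mul_assoc, ← mul_pow, h₀]
  | succ n hjn ih =>
    have hle : a n ≤ a (n + 1) := ha ⟨hjn, n.le_succ⟩ ⟨hjn.trans n.le_succ, le_rfl⟩ n.le_succ
    obtain ⟨hlower, hupper⟩ := ih (ha.mono (Set.Icc_subset_Icc_right n.le_succ))
    have hsq : (-1 : ℝ) ^ (n + 1) * (-1) ^ (n + 1) = 1 := by rw [← mul_pow]; norm_num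
    rw [Finset.sum_Ico_succ_top (hjn.trans n.le_succ), mul_add, ← mul_assoc, hsq, pow_succ]
    constructor <;> linarith

theorem abs_sum_Ico_neg_one_pow_mul_le_of_antitoneOn {a : ℕ → ℝ} {j n : ℕ} (hjn : j ≤ n)
    (ha : AntitoneOn a (Set.Icc j n)) (h₀ : 0 ≤ a n) :
    |∑ i ∈ Finset.Ico j (n + 1), (-1) ^ i * a i| ≤ a j := by
  suffices h : (-1) ^ j * ∑ i ∈ Finset.Ico j (n + 1), (-1) ^ i * a i ∈ Set.Icc 0 (a j) by
    have := abs_of_nonneg h.1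
    rw [abs_mul, abs_neg_one_pow, one_mul] at this
    exact this.trans_le h.2
  induction hjn using Nat.decreasingInduction with
  | self => simp [← mul_assoc, ← mul_pow, h₀]
  | of_succ j hjn ih =>
    have hle : a (j + 1) ≤ a j := ha ⟨le_rfl, hjn.le⟩ ⟨j.le_succ, hjn⟩ j.le_succ
    obtain ⟨hlower, hupper⟩ := ih (ha.mono (Set.Icc_subset_Icc_left j.le_succ))
    have hsq : (-1 : ℝ) ^ j * (-1) ^ j = 1 := by rw [← mul_pow]; norm_num
    rw [pow_succ] at hlower hupper
    rw [Finset.sum_eq_sum_Ico_succ_bot (hjn.trans n.lt_succ_self), mul_add, ← mul_assoc, hsq]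
    constructor <;> linarith

end Summation

section RealEstimates

theorem inv_abs_natCast_sub_half_le (n κ : ℕ) : |(n : ℝ) - κ - 1 / 2|⁻¹ ≤ 2 := by
  have hhalf : 1 / 2 ≤ |(n : ℝ) - κ - 1 / 2| := by
    rcases le_or_gt n κ with h | h
    · have h' : (n : ℝ) ≤ κ := by exact_mod_cast h
      rw [le_abs]; right; linarith
    · have h' : (κ : ℝ) + 1 ≤ n := by exact_mod_cast h
      rw [le_abs]; left; linarith
  rw [inv_le_comm₀ (by positivity) two_pos]
  linarith

theorem sum_range_inv_add_half_le {n m : ℕ} (hnm : n ≤ m) :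
    ∑ i ∈ Finset.range n, ((i : ℝ) + 1 / 2)⁻¹ ≤ 2 * (1 + log m) := by
  calc ∑ i ∈ Finset.range n, ((i : ℝ) + 1 / 2)⁻¹
    _ ≤ ∑ i ∈ Finset.range m, ((i : ℝ) + 1 / 2)⁻¹ :=
      Finset.sum_le_sum_of_subset_of_nonneg (Finset.range_mono hnm) fun _ _ _ => by positivity
    _ ≤ ∑ i ∈ Finset.range m, 2 * ((i : ℝ) + 1)⁻¹ := by
      refine Finset.sum_le_sum fun i _ => ?_
      rw [← div_eq_mul_inv, inv_le_comm₀ (by positivity) (by positivity), inv_div]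
      linarith
    _ = 2 * (harmonic m : ℝ) := by simp [harmonic, Finset.mul_sum]
    _ ≤ 2 * (1 + log m) := by gcongr; exact harmonic_le_one_add_log m

theorem sum_range_inv_abs_sub_half_le {m κ : ℕ} (hκ : κ < m) :
    ∑ n ∈ Finset.range m, |(n : ℝ) - κ - 1 / 2|⁻¹ ≤ 4 * (1 + log m) := by
  obtain ⟨q, rfl⟩ := Nat.exists_eq_add_of_le (Nat.succ_le_of_lt hκ)
  have hleft : ∑ n ∈ Finset.range (κ + 1), |(n : ℝ) - κ - 1 / 2|⁻¹ =
      ∑ i ∈ Finset.range (κ + 1), ((i : ℝ) + 1 / 2)⁻¹ := by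
    rw [← Finset.sum_range_reflect]
    refine Finset.sum_congr rfl fun i hi => ?_
    rw [Nat.add_sub_cancel, Nat.cast_sub (Finset.mem_range_succ_iff.1 hi), ← abs_neg,
      abs_of_nonneg (by ring_nf; positivity)]
    ring
  have hright : ∑ i ∈ Finset.range q, |((κ + 1 + i : ℕ) : ℝ) - κ - 1 / 2|⁻¹ =
      ∑ i ∈ Finset.range q, ((i : ℝ) + 1 / 2)⁻¹ := by
    refine Finset.sum_congr rfl fun i _ => ?_
    push_cast
    rw [abs_of_nonneg (by ring_nf; positivity)]
    ring
  rw [Nat.succ_eq_add_one, Finset.sum_range_add, hleft, hright]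
  linarith [sum_range_inv_add_half_le (Nat.le_add_right (κ + 1) q),
    sum_range_inv_add_half_le (Nat.le_add_left q (κ + 1))]

theorem abs_sq_sub_le_four_mul {p ε : ℝ} (hε : ε = 0 ∨ ε = 1) (hp : |p - ε| ≤ 2) :
    |p ^ 2 - ε| ≤ 4 * |p - ε| := by
  have hfactor : p ^ 2 - ε = (p - ε) * (p + ε) := by rcases hε with rfl | rfl <;> ring
  have hsum : |p + ε| ≤ 4 := by
    rw [abs_le] at hp ⊢
    rcases hε with rfl | rfl <;> constructor <;> linarith
  rw [hfactor, abs_mul, mul_comm]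
  gcongr

theorem abs_sub_sq_sub_mul_one_sub_le {S T y a b B r : ℝ} (hS : |S - y| ≤ a * r)
    (hT : |T - y| ≤ b * r) (hy : |y| ≤ B) (hb : 0 ≤ b) (hr : r ≤ 1) :
    |S - T ^ 2 - y * (1 - y)| ≤ (a + b * (2 * B + b)) * r := by
  have hfactor : S - T ^ 2 - y * (1 - y) = (S - y) - (T - y) * (T + y) := by ring
  have hsum : |T + y| ≤ 2 * B + b :=
    calc |T + y| = |(T - y) + 2 * y| := by ring_nf
      _ ≤ |T - y| + 2 * |y| := (abs_add_le _ _).trans_eq (by rw [abs_mul, abs_two])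
      _ ≤ 2 * B + b := by linarith [mul_le_of_le_one_right hb hr]
  calc |S - T ^ 2 - y * (1 - y)|
    _ ≤ |S - y| + |T - y| * |T + y| := by
      rw [hfactor, ← abs_mul]
      exact abs_sub _ _
    _ ≤ a * r + b * r * (2 * B + b) := by
      gcongr
      exact (abs_nonneg _).trans hT
    _ = (a + b * (2 * B + b)) * r := by ring

theorem one_add_log_div_le_two_div_sqrt {x : ℝ} (hx : 0 < x) : (1 + log x) / x ≤ 2 / √x := by
  have hlog := log_le_sub_one_of_pos (sqrt_pos.2 hx)
  rw [log_sqrt hx.le] at hlog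
  calc (1 + log x) / x
    _ ≤ 2 * √x / x := by gcongr; linarith
    _ = 2 / √x := by rw [mul_div_assoc, sqrt_div_self, div_eq_mul_inv]

end RealEstimates

section Lagrange

open Polynomial

variable {K ι : Type*} [Field K] {s : Finset ι} {v : ι → K} {P : K[X]}

theorem eq_C_leadingCoeff_mul_nodal (hv : Set.InjOn v s) (hdeg : P.degree = s.card)
    (hroot : ∀ i ∈ s, P.eval (v i) = 0) : P = C P.leadingCoeff * Lagrange.nodal s v := by
  have hlead : P.leadingCoeff ≠ 0 := leadingCoeff_ne_zero.2 fun h => by simp [h] at hdeg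
  refine eq_of_degree_le_of_eval_index_eq s hv hdeg.le ?_ ?_ fun i hi => ?_
  · rw [degree_C_mul hlead, Lagrange.degree_nodal, hdeg]
  · rw [leadingCoeff_mul, leadingCoeff_C, Lagrange.nodal_monic.leadingCoeff, mul_one]
  · rw [hroot i hi, eval_mul, Lagrange.eval_nodal_at_node hi, mul_zero]

variable [DecidableEq ι]

theorem eval_lagrangeBasis (i : ι) (x : K) :
    (Lagrange.basis s v i).eval x = ∏ j ∈ s.erase i, (x - v j) / (v i - v j) := by
  rw [Lagrange.basis, eval_prod]
  refine Finset.prod_congr rfl fun j _ => ?_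
  rw [Lagrange.basisDivisor, eval_mul, eval_C, eval_sub, eval_X, eval_C, div_eq_inv_mul]

theorem eval_lagrangeBasis_mul_eval_derivative (hv : Set.InjOn v s) (hdeg : P.degree = s.card)
    (hroot : ∀ i ∈ s, P.eval (v i) = 0) {i : ι} (hi : i ∈ s) (x : K) :
    (Lagrange.basis s v i).eval x * ((x - v i) * P.derivative.eval (v i)) = P.eval x := by
  have hne : ∏ j ∈ s.erase i, (v i - v j) ≠ 0 := Finset.prod_ne_zero_iff.2 fun j hj =>
    sub_ne_zero.2 fun h => (Finset.ne_of_mem_erase hj) (hv (Finset.mem_of_mem_erase hj) hi h.symm)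
  rw [eq_C_leadingCoeff_mul_nodal hv hdeg hroot, derivative_C_mul, eval_mul, eval_mul,
    Lagrange.eval_nodal_derivative_eval_node_eq hi, Lagrange.eval_nodal, Lagrange.eval_nodal,
    eval_lagrangeBasis, Finset.prod_div_distrib, ← Finset.mul_prod_erase s _ hi, eval_C, eval_C]
  field_simp

end Lagrange

section Trigonometry

theorem abs_sin_sub_sin_le_sin_sub {a b : ℝ} (ha : 0 ≤ a) (hab : a ≤ b) (hb : b ≤ π) :
    |sin b - sin a| ≤ sin (b - a) := by
  have hsin_a : 0 ≤ sin a := sin_nonneg_of_nonneg_of_le_pi ha (hab.trans hb)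
  have hsin_b : 0 ≤ sin b := sin_nonneg_of_nonneg_of_le_pi (ha.trans hab) hb
  have hsin_sub : 0 ≤ sin (b - a) :=
    sin_nonneg_of_nonneg_of_le_pi (sub_nonneg.2 hab) (by linarith)
  have hexpand_b : sin b = sin a * cos (b - a) + cos a * sin (b - a) := by
    rw [← sin_add, add_sub_cancel]
  have hexpand_a : sin a = sin b * cos (b - a) - cos b * sin (b - a) := by
    rw [← sin_sub, sub_sub_cancel]
  rw [abs_le]
  constructor
  · nlinarith [cos_le_one (b - a), neg_one_le_cos b]
  · nlinarith [cos_le_one (b - a), cos_le_one a]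

theorem cos_mul_sin_sub_sin_le {a b : ℝ} (t : ℝ) (ha : 0 ≤ a) (hab : a ≤ b) (hb : b ≤ π) :
    cos t * (sin b - sin a) ≤ sin (b - a) :=
  calc cos t * (sin b - sin a)
    _ ≤ |cos t| * |sin b - sin a| := (le_abs_self _).trans_eq (abs_mul _ _)
    _ ≤ 1 * |sin b - sin a| := by gcongr; exact abs_cos_le_one t
    _ ≤ sin (b - a) := (one_mul _).trans_le (abs_sin_sub_sin_le_sin_sub ha hab hb)

theorem monotoneOn_sin_div_cos_sub_cos {t : ℝ} (ht : t ≤ π) :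
    MonotoneOn (fun θ => sin θ / (cos θ - cos t)) (Set.Ico 0 t) := by
  rintro a ⟨ha, hat⟩ b ⟨hb, hbt⟩ hab
  have hcos_a := cos_lt_cos_of_nonneg_of_le_pi ha ht hat
  have hcos_b := cos_lt_cos_of_nonneg_of_le_pi hb ht hbt
  have h := cos_mul_sin_sub_sin_le t ha hab (hbt.le.trans ht)
  rw [sin_sub] at h
  rw [div_le_div_iff₀ (sub_pos.2 hcos_a) (sub_pos.2 hcos_b)]
  linarith

theorem antitoneOn_sin_div_cos_sub_cos {t : ℝ} (ht : 0 ≤ t) :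
    AntitoneOn (fun θ => sin θ / (cos t - cos θ)) (Set.Ioc t π) := by
  rintro a ⟨hta, ha⟩ b ⟨htb, hb⟩ hab
  have hcos_a := cos_lt_cos_of_nonneg_of_le_pi ht ha hta
  have hcos_b := cos_lt_cos_of_nonneg_of_le_pi ht hb htb
  have h := cos_mul_sin_sub_sin_le t (ht.trans hta.le) hab hb
  rw [sin_sub] at h
  rw [div_le_div_iff₀ (sub_pos.2 hcos_b) (sub_pos.2 hcos_a)]
  linarith

theorem sin_mul_abs_sub_le_pi_mul_abs_cos_sub_cos {s t : ℝ} (hs : s ∈ Set.Icc 0 π)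
    (ht : t ∈ Set.Icc 0 π) : sin s * |t - s| ≤ π * |cos t - cos s| := by
  have hsin_avg : 0 ≤ sin ((t + s) / 2) :=
    sin_nonneg_of_nonneg_of_le_pi (by linarith [hs.1, ht.1]) (by linarith [hs.2, ht.2])
  have hsin_s : sin s ≤ 2 * sin ((t + s) / 2) := by
    nlinarith [sin_add_sin t s, sin_nonneg_of_mem_Icc ht, cos_le_one ((t - s) / 2)]
  have hjordan : |t - s| ≤ π * |sin ((t - s) / 2)| := by
    have hhalf : |(t - s) / 2| ≤ π / 2 := by
      rw [abs_le]; constructor <;> linarith [hs.1, hs.2, ht.1, ht.2]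
    calc |t - s| = π * (2 / π * |(t - s) / 2|) := by rw [abs_div, abs_two]; field_simp
      _ ≤ π * |sin ((t - s) / 2)| := by gcongr; exact mul_abs_le_abs_sin hhalf
  calc sin s * |t - s|
    _ ≤ 2 * sin ((t + s) / 2) * (π * |sin ((t - s) / 2)|) := by gcongr
    _ = π * |cos t - cos s| := by
      rw [cos_sub_cos, abs_mul, abs_mul, abs_of_nonneg hsin_avg, abs_neg, abs_two]; ring

end Trigonometry

section ChebyshevNodes

/-- The angle `(2i + 1)π / (2m)` of a Chebyshev–Gauss node, indexed from `i = 0`, so that the node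
`chebNode m (i + 1)` is its cosine. -/
noncomputable def chebAngle (m i : ℕ) : ℝ := (2 * i + 1) * π / (2 * m)

theorem chebNode_succ (m i : ℕ) : chebNode m (i + 1) = cos (chebAngle m i) := by
  rw [chebNode, chebAngle]
  push_cast
  ring_nf

variable {m i : ℕ}

theorem chebAngle_sub (m i j : ℕ) : chebAngle m i - chebAngle m j = (i - j) * (π / m) := by
  rw [chebAngle, chebAngle]
  ring

theorem mul_chebAngle (hm : m ≠ 0) (i : ℕ) : m * chebAngle m i = i * π + π / 2 := by
  rw [chebAngle]
  field_simp

theorem monotone_chebAngle (m : ℕ) : Monotone (chebAngle m) := fun i j hij => by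
  rw [chebAngle, chebAngle]
  gcongr

theorem chebAngle_mem_Ioo (hi : i < m) : chebAngle m i ∈ Set.Ioo 0 π := by
  have hm : (0 : ℝ) < m := by exact_mod_cast i.zero_le.trans_lt hi
  have hi' : (i : ℝ) + 1 ≤ m := by exact_mod_cast hi
  rw [chebAngle]
  refine ⟨by positivity, (div_lt_iff₀ (by positivity)).2 ?_⟩
  nlinarith [pi_pos]

theorem cos_mul_chebAngle (hm : m ≠ 0) (i : ℕ) : cos (m * chebAngle m i) = 0 := by
  rw [mul_chebAngle hm, cos_add_pi_div_two, sin_nat_mul_pi, neg_zero]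

theorem sin_mul_chebAngle (hm : m ≠ 0) (i : ℕ) : sin (m * chebAngle m i) = (-1) ^ i := by
  rw [mul_chebAngle hm, sin_add_pi_div_two, cos_nat_mul_pi]

theorem injOn_chebNode (m : ℕ) : Set.InjOn (chebNode m) (Finset.Icc 1 m) := by
  intro i hi j hj h
  obtain ⟨i, rfl⟩ := Nat.exists_eq_add_of_le' (Finset.mem_Icc.1 hi).1
  obtain ⟨j, rfl⟩ := Nat.exists_eq_add_of_le' (Finset.mem_Icc.1 hj).1
  have hi' : i < m := (Finset.mem_Icc.1 hi).2
  have hj' : j < m := (Finset.mem_Icc.1 hj).2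
  have hm : (m : ℝ) ≠ 0 := by exact_mod_cast (i.zero_le.trans_lt hi').ne'
  rw [chebNode_succ, chebNode_succ] at h
  have hangle := injOn_cos (Set.Ioo_subset_Icc_self (chebAngle_mem_Ioo hi'))
    (Set.Ioo_subset_Icc_self (chebAngle_mem_Ioo hj')) h
  have hsub : ((i : ℝ) - j) * (π / m) = 0 := by rw [← chebAngle_sub, hangle, sub_self]
  have hij : (i : ℝ) = j :=
    sub_eq_zero.1 ((mul_eq_zero.1 hsub).resolve_right (div_ne_zero pi_ne_zero hm))
  rw [Nat.cast_injective hij]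

theorem exists_abs_sub_chebAngle_le {t : ℝ} (hm : m ≠ 0) (ht : t ∈ Set.Icc 0 π) :
    ∃ κ < m, |t - chebAngle m κ| ≤ π / (2 * m) := by
  have hm' : (0 : ℝ) < m := by positivity
  suffices h : ∃ κ < m, (κ : ℝ) ≤ t * m / π ∧ t * m / π ≤ κ + 1 by
    obtain ⟨κ, hκ, hlower, hupper⟩ := h
    rw [le_div_iff₀ pi_pos] at hlower
    rw [div_le_iff₀ pi_pos] at hupper
    refine ⟨κ, hκ, ?_⟩
    have hscale : t - chebAngle m κ = (2 * (t * m) - (2 * κ + 1) * π) / (2 * m) := by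
      rw [chebAngle]
      field_simp
    rw [hscale, abs_div, abs_of_pos (by positivity : (0 : ℝ) < 2 * m)]
    gcongr
    rw [abs_le]
    constructor <;> linarith
  rcases ht.2.eq_or_lt with rfl | htπ
  · refine ⟨m - 1, Nat.sub_one_lt hm, ?_⟩
    rw [mul_div_cancel_left₀ _ pi_ne_zero, Nat.cast_pred (Nat.pos_of_ne_zero hm)]
    constructor <;> linarith
  · have hnonneg : 0 ≤ t * m / π := div_nonneg (mul_nonneg ht.1 hm'.le) pi_pos.le
    refine ⟨⌊t * m / π⌋₊, (Nat.floor_lt hnonneg).2 ?_, Nat.floor_le hnonneg,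
      (Nat.lt_floor_add_one _).le⟩
    rw [div_lt_iff₀ pi_pos]
    nlinarith

end ChebyshevNodes

section LagrangeBasis

open Polynomial

variable {m i : ℕ}

theorem lagBasis_eq_eval (m j : ℕ) (x : ℝ) :
    lagBasis m j x = (Lagrange.basis (Finset.Icc 1 m) (chebNode m) j).eval x :=
  (eval_lagrangeBasis j x).symm

theorem sum_range_lagBasis (hm : m ≠ 0) (x : ℝ) :
    ∑ i ∈ Finset.range m, lagBasis m (i + 1) x = 1 := by
  have hnonempty : (Finset.Icc 1 m).Nonempty := Finset.nonempty_Icc.2 (Nat.one_le_iff_ne_zero.2 hm)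
  rw [← sum_Icc_one_eq_sum_range fun j => lagBasis m j x]
  simp only [lagBasis_eq_eval]
  rw [← eval_finsetSum, Lagrange.sum_basis (injOn_chebNode m) hnonempty, eval_one]

theorem lagBasis_succ_cos_mul (hi : i < m) (t : ℝ) :
    lagBasis m (i + 1) (cos t) * (m * (cos t - cos (chebAngle m i))) =
      (-1) ^ i * sin (chebAngle m i) * cos (m * t) := by
  have hm : m ≠ 0 := Nat.ne_zero_of_lt hi
  have hdeg : (Chebyshev.T ℝ m).degree = (Finset.Icc 1 m).card := by
    rw [Chebyshev.degree_T, Nat.card_Icc, Nat.add_sub_cancel, Int.natAbs_natCast]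
  have hroot (j : ℕ) (hj : j ∈ Finset.Icc 1 m) : (Chebyshev.T ℝ m).eval (chebNode m j) = 0 := by
    obtain ⟨j, rfl⟩ := Nat.exists_eq_add_of_le' (Finset.mem_Icc.1 hj).1
    rw [chebNode_succ, Chebyshev.T_real_cos, Int.cast_natCast, cos_mul_chebAngle hm]
  have hbasis := eval_lagrangeBasis_mul_eval_derivative (injOn_chebNode m) hdeg hroot
    (Finset.mem_Icc.2 ⟨Nat.le_add_left 1 i, hi⟩) (cos t)
  have hU : (Chebyshev.U ℝ (m - 1)).eval (cos (chebAngle m i)) * sin (chebAngle m i) =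
      (-1) ^ i := by
    rw [Chebyshev.U_real_cos, ← sin_mul_chebAngle hm]
    push_cast
    ring_nf
  have hsq : ((-1 : ℝ) ^ i) ^ 2 = 1 := by rw [← pow_mul, mul_comm, pow_mul, neg_one_sq, one_pow]
  rw [← lagBasis_eq_eval, chebNode_succ, Chebyshev.T_derivative_eq_U, Chebyshev.T_real_cos,
    eval_mul, Int.cast_natCast, Int.cast_natCast, eval_natCast] at hbasis
  rw [← hbasis]
  linear_combination (-(lagBasis m (i + 1) (cos t) * (m * (cos t - cos (chebAngle m i))))) *
    ((-1) ^ i * hU + hsq)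

theorem abs_lagBasis_succ_cos_mul_le {t : ℝ} (hi : i < m) (ht : t ∈ Set.Icc 0 π) :
    |lagBasis m (i + 1) (cos t)| * (m * |t - chebAngle m i|) ≤ π := by
  have hangle := chebAngle_mem_Ioo hi
  have hsin : 0 < sin (chebAngle m i) := sin_pos_of_mem_Ioo hangle
  have hformula := congrArg abs (lagBasis_succ_cos_mul hi t)
  simp only [abs_mul, abs_neg_one_pow, one_mul, abs_of_pos hsin, Nat.abs_cast] at hformula
  refine le_of_mul_le_mul_right ?_ hsin
  calc |lagBasis m (i + 1) (cos t)| * (m * |t - chebAngle m i|) * sin (chebAngle m i)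
    _ = |lagBasis m (i + 1) (cos t)| * (m * (sin (chebAngle m i) * |t - chebAngle m i|)) := by
      ring
    _ ≤ |lagBasis m (i + 1) (cos t)| * (m * (π * |cos t - cos (chebAngle m i)|)) := by
      gcongr _ * (_ * ?_)
      exact sin_mul_abs_sub_le_pi_mul_abs_cos_sub_cos (Set.Ioo_subset_Icc_self hangle) ht
    _ = π * (sin (chebAngle m i) * |cos (m * t)|) := by rw [← hformula]; ring
    _ ≤ π * (sin (chebAngle m i) * 1) := by gcongr; exact abs_cos_le_one _
    _ = π * sin (chebAngle m i) := by rw [mul_one]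

end LagrangeBasis

section CumulativeSums

variable {m i j n κ : ℕ} {t : ℝ}

theorem lagBasis_succ_cos_eq (hi : i < m) (hne : cos t ≠ cos (chebAngle m i)) :
    lagBasis m (i + 1) (cos t) =
      cos (m * t) / m * ((-1) ^ i * (sin (chebAngle m i) / (cos t - cos (chebAngle m i)))) := by
  have hm : (m : ℝ) ≠ 0 := Nat.cast_ne_zero.2 (Nat.ne_zero_of_lt hi)
  have hsub : cos t - cos (chebAngle m i) ≠ 0 := sub_ne_zero.2 hne
  rw [div_mul_eq_mul_div, eq_div_iff hm, ← mul_div_assoc, ← mul_div_assoc, eq_div_iff hsub]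
  linear_combination lagBasis_succ_cos_mul hi t

theorem abs_sum_Ico_lagBasis_le_right (hjn : j ≤ n) (hn : n < m) (ht : t ≤ π)
    (hnt : chebAngle m n < t) :
    |∑ i ∈ Finset.Ico j (n + 1), lagBasis m (i + 1) (cos t)| ≤ |lagBasis m (n + 1) (cos t)| := by
  set a : ℕ → ℝ := fun i => sin (chebAngle m i) / (cos (chebAngle m i) - cos t) with ha
  have hmem (i : ℕ) (hi : i ≤ n) : chebAngle m i ∈ Set.Ico 0 t :=
    ⟨(chebAngle_mem_Ioo (hi.trans_lt hn)).1.le, (monotone_chebAngle m hi).trans_lt hnt⟩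
  have hterm (i : ℕ) (hi : i ≤ n) :
      lagBasis m (i + 1) (cos t) = -(cos (m * t) / m) * ((-1) ^ i * a i) := by
    have hcos := cos_lt_cos_of_nonneg_of_le_pi (hmem i hi).1 ht (hmem i hi).2
    rw [lagBasis_succ_cos_eq (hi.trans_lt hn) hcos.ne, ← neg_sub, div_neg, ha]
    ring
  have hmono : MonotoneOn a (Set.Icc j n) := fun p hp q hq hpq =>
    monotoneOn_sin_div_cos_sub_cos ht (hmem p hp.2) (hmem q hq.2) (monotone_chebAngle m hpq)
  have hnonneg (i : ℕ) (hi : i ≤ n) : 0 ≤ a i :=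
    div_nonneg (sin_pos_of_mem_Ioo (chebAngle_mem_Ioo (hi.trans_lt hn))).le
      (sub_nonneg.2 (cos_le_cos_of_nonneg_of_le_pi (hmem i hi).1 ht (hmem i hi).2.le))
  rw [Finset.sum_congr rfl fun i hi => hterm i (Nat.lt_succ_iff.1 (Finset.mem_Ico.1 hi).2),
    ← Finset.mul_sum, hterm n le_rfl, abs_mul, abs_mul, abs_mul, abs_neg_one_pow, one_mul,
    abs_of_nonneg (hnonneg n le_rfl)]
  gcongr
  exact abs_sum_Ico_neg_one_pow_mul_le_of_monotoneOn hjn hmono (hnonneg j hjn)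

theorem abs_sum_Ico_lagBasis_le_left (hjn : j ≤ n) (hn : n < m) (ht : 0 ≤ t)
    (htj : t < chebAngle m j) :
    |∑ i ∈ Finset.Ico j (n + 1), lagBasis m (i + 1) (cos t)| ≤ |lagBasis m (j + 1) (cos t)| := by
  set a : ℕ → ℝ := fun i => sin (chebAngle m i) / (cos t - cos (chebAngle m i))
  have hmem (i : ℕ) (hi : i ∈ Set.Icc j n) : chebAngle m i ∈ Set.Ioc t π :=
    ⟨htj.trans_le (monotone_chebAngle m hi.1), (chebAngle_mem_Ioo (hi.2.trans_lt hn)).2.le⟩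
  have hcos (i : ℕ) (hi : i ∈ Set.Icc j n) : cos (chebAngle m i) < cos t :=
    cos_lt_cos_of_nonneg_of_le_pi ht (hmem i hi).2 (hmem i hi).1
  have hterm (i : ℕ) (hi : i ∈ Set.Icc j n) :
      lagBasis m (i + 1) (cos t) = cos (m * t) / m * ((-1) ^ i * a i) :=
    lagBasis_succ_cos_eq (hi.2.trans_lt hn) (hcos i hi).ne'
  have hanti : AntitoneOn a (Set.Icc j n) := fun p hp q hq hpq =>
    antitoneOn_sin_div_cos_sub_cos ht (hmem p hp) (hmem q hq) (monotone_chebAngle m hpq)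
  have hnonneg (i : ℕ) (hi : i ∈ Set.Icc j n) : 0 ≤ a i :=
    div_nonneg (sin_pos_of_mem_Ioo (chebAngle_mem_Ioo (hi.2.trans_lt hn))).le
      (sub_nonneg.2 (hcos i hi).le)
  rw [Finset.sum_congr rfl fun i hi => hterm i ⟨(Finset.mem_Ico.1 hi).1,
      Nat.lt_succ_iff.1 (Finset.mem_Ico.1 hi).2⟩,
    ← Finset.mul_sum, hterm j ⟨le_rfl, hjn⟩, abs_mul, abs_mul, abs_mul, abs_neg_one_pow, one_mul,
    abs_of_nonneg (hnonneg j ⟨le_rfl, hjn⟩)]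
  gcongr
  exact abs_sum_Ico_neg_one_pow_mul_le_of_antitoneOn hjn hanti (hnonneg n ⟨hjn, le_rfl⟩)

theorem abs_lagBasis_succ_cos_le_inv {r : ℝ} (hi : i < m) (ht : t ∈ Set.Icc 0 π) (hr : 0 < r)
    (hdist : r * (π / m) ≤ |t - chebAngle m i|) : |lagBasis m (i + 1) (cos t)| ≤ r⁻¹ := by
  have hm : (0 : ℝ) < m := Nat.cast_pos.2 (Nat.zero_lt_of_lt hi)
  refine (le_mul_inv_iff₀ hr).2 (le_of_mul_le_mul_right ?_ pi_pos) |>.trans_eq (one_mul _)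
  calc |lagBasis m (i + 1) (cos t)| * r * π
    _ = |lagBasis m (i + 1) (cos t)| * (m * (r * (π / m))) := by field_simp
    _ ≤ |lagBasis m (i + 1) (cos t)| * (m * |t - chebAngle m i|) := by gcongr
    _ ≤ 1 * π := (abs_lagBasis_succ_cos_mul_le hi ht).trans_eq (one_mul π).symm

theorem abs_sum_range_lagBasis_le (hκ : κ < m) (ht : t ∈ Set.Icc 0 π)
    (htκ : |t - chebAngle m κ| ≤ π / (2 * m)) (hn : n ≤ κ) :
    |∑ i ∈ Finset.range n, lagBasis m (i + 1) (cos t)| ≤ |(n : ℝ) - κ - 1 / 2|⁻¹ := by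
  rcases n with - | n
  · rw [Finset.sum_range_zero, abs_zero]
    positivity
  have hpos : (0 : ℝ) < π / m := div_pos pi_pos (Nat.cast_pos.2 (Nat.zero_lt_of_lt hκ))
  have hnκ : (n : ℝ) + 1 ≤ κ := by exact_mod_cast hn
  have hgap : |((n + 1 : ℕ) : ℝ) - κ - 1 / 2| = κ - n - 1 / 2 := by
    push_cast
    rw [abs_of_neg (by linarith)]
    ring
  have hdist : (κ - n - 1 / 2) * (π / m) ≤ t - chebAngle m n := by
    have hhalf : π / (2 * m) = 1 / 2 * (π / m) := by ring
    linarith [chebAngle_sub m κ n, (abs_le.1 htκ).1]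
  have hnt : chebAngle m n < t := by nlinarith
  rw [hgap, Finset.range_eq_Ico]
  exact (abs_sum_Ico_lagBasis_le_right n.zero_le (hn.trans hκ.le) ht.2 hnt).trans
    (abs_lagBasis_succ_cos_le_inv (hn.trans hκ.le) ht (by linarith) (hdist.trans (le_abs_self _)))

theorem abs_sum_Ico_lagBasis_le (hκ : κ < n) (hn : n < m) (ht : t ∈ Set.Icc 0 π)
    (htκ : |t - chebAngle m κ| ≤ π / (2 * m)) :
    |∑ i ∈ Finset.Ico n m, lagBasis m (i + 1) (cos t)| ≤ |(n : ℝ) - κ - 1 / 2|⁻¹ := by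
  have hpos : (0 : ℝ) < π / m := div_pos pi_pos (Nat.cast_pos.2 (Nat.zero_lt_of_lt hn))
  have hκn : (κ : ℝ) + 1 ≤ n := by exact_mod_cast hκ
  have hgap : |(n : ℝ) - κ - 1 / 2| = n - κ - 1 / 2 := abs_of_pos (by linarith)
  have hdist : (n - κ - 1 / 2) * (π / m) ≤ chebAngle m n - t := by
    have hhalf : π / (2 * m) = 1 / 2 * (π / m) := by ring
    linarith [chebAngle_sub m n κ, (abs_le.1 htκ).2]
  have htn : t < chebAngle m n := by nlinarith
  have hlast : m - 1 + 1 = m := Nat.sub_one_add_one (Nat.ne_zero_of_lt hn)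
  have hsum := abs_sum_Ico_lagBasis_le_left (Nat.le_sub_one_of_lt hn)
    (Nat.sub_one_lt (Nat.ne_zero_of_lt hn)) ht.1 htn
  rw [hlast] at hsum
  rw [hgap]
  exact hsum.trans (abs_lagBasis_succ_cos_le_inv hn ht (by linarith)
    (hdist.trans (abs_sub_comm t _ ▸ le_abs_self _)))

theorem abs_sum_range_lagBasis_sub_step_le (hκ : κ < m) (hn : n < m) (ht : t ∈ Set.Icc 0 π)
    (htκ : |t - chebAngle m κ| ≤ π / (2 * m)) :
    |∑ i ∈ Finset.range n, lagBasis m (i + 1) (cos t) - if κ < n then 1 else 0| ≤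
      |(n : ℝ) - κ - 1 / 2|⁻¹ := by
  split_ifs with hκn
  · have htail := abs_sum_Ico_lagBasis_le hκn hn ht htκ
    rwa [Finset.sum_Ico_eq_sub _ hn.le, sum_range_lagBasis (Nat.ne_zero_of_lt hn), abs_sub_comm]
      at htail
  · rw [sub_zero]
    exact abs_sum_range_lagBasis_le hκ ht htκ (not_lt.1 hκn)

theorem abs_sq_sum_range_lagBasis_sub_step_le (hκ : κ < m) (hn : n < m) (ht : t ∈ Set.Icc 0 π)
    (htκ : |t - chebAngle m κ| ≤ π / (2 * m)) :
    |(∑ i ∈ Finset.range n, lagBasis m (i + 1) (cos t)) ^ 2 - if κ < n then 1 else 0| ≤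
      4 * |(n : ℝ) - κ - 1 / 2|⁻¹ := by
  have hdev := abs_sum_range_lagBasis_sub_step_le hκ hn ht htκ
  have hε : (if κ < n then (1 : ℝ) else 0) = 0 ∨ (if κ < n then (1 : ℝ) else 0) = 1 :=
    (ite_eq_or_eq _ _ _).symm
  refine (abs_sq_sub_le_four_mul hε (hdev.trans (inv_abs_natCast_sub_half_le n κ))).trans ?_
  gcongr

end CumulativeSums

section VarianceKernel

variable {F : ℝ → ℝ} {K : NNReal} {m κ : ℕ} {t : ℝ}

theorem abs_sum_mul_comp_cos_chebAngle_sub_le {w : ℕ → ℝ} {c : ℝ} (hc : 0 ≤ c)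
    (hF : LipschitzOnWith K F (Set.Icc (-1) 1)) (hκ : κ < m)
    (htκ : |t - chebAngle m κ| ≤ π / (2 * m)) (hw : ∑ i ∈ Finset.range m, w i = 1)
    (hstep : ∀ n < m, |∑ i ∈ Finset.range n, w i - if κ < n then 1 else 0| ≤
      c * |(n : ℝ) - κ - 1 / 2|⁻¹) :
    |∑ i ∈ Finset.range m, F (cos (chebAngle m i)) * w i - F (cos t)| ≤
      (4 * c + 1) * K * π * ((1 + log m) / m) := by
  have hm : (1 : ℝ) ≤ m := by exact_mod_cast Nat.one_le_of_lt hκ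
  have hF' (a b : ℝ) : |F (cos a) - F (cos b)| ≤ K * |a - b| :=
    (hF.dist_le_mul _ (cos_mem_Icc a) _ (cos_mem_Icc b)).trans
      (mul_le_mul_of_nonneg_left (abs_cos_sub_cos_le a b) K.coe_nonneg)
  have hincrement (i : ℕ) : |F (cos (chebAngle m (i + 1))) - F (cos (chebAngle m i))| ≤
      K * (π / m) := by
    refine (hF' _ _).trans_eq ?_
    rw [chebAngle_sub, Nat.cast_succ, add_sub_cancel_left, one_mul, abs_of_nonneg (by positivity)]
  have hnode : |∑ i ∈ Finset.range m, F (cos (chebAngle m i)) * w i - F (cos (chebAngle m κ))| ≤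
      K * (π / m) * (c * (4 * (1 + log m))) := by
    refine (abs_sum_mul_sub_le_mul_sum_abs hκ hw hincrement).trans ?_
    gcongr
    calc ∑ n ∈ Finset.range m, |∑ i ∈ Finset.range n, w i - if κ < n then 1 else 0|
      _ ≤ ∑ n ∈ Finset.range m, c * |(n : ℝ) - κ - 1 / 2|⁻¹ :=
        Finset.sum_le_sum fun n hn => hstep n (Finset.mem_range.1 hn)
      _ ≤ c * (4 * (1 + log m)) := by
        rw [← Finset.mul_sum]
        gcongr
        exact sum_range_inv_abs_sub_half_le hκ
  have hnearest : |F (cos (chebAngle m κ)) - F (cos t)| ≤ K * (π / m) * (1 + log m) := by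
    calc |F (cos (chebAngle m κ)) - F (cos t)|
      _ ≤ K * |t - chebAngle m κ| := (hF' _ _).trans_eq (by rw [abs_sub_comm])
      _ ≤ K * (π / (2 * m)) := by gcongr
      _ ≤ K * (π / m) := by gcongr; linarith
      _ ≤ K * (π / m) * (1 + log m) :=
        le_mul_of_one_le_right (by positivity) (le_add_of_nonneg_right (log_nonneg hm))
  calc |∑ i ∈ Finset.range m, F (cos (chebAngle m i)) * w i - F (cos t)|
    _ ≤ _ := abs_sub_le _ (F (cos (chebAngle m κ))) _
    _ ≤ _ := add_le_add hnode hnearest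
    _ = (4 * c + 1) * K * π * ((1 + log m) / m) := by ring

theorem abs_sum_mul_lagBasis_sub_le (hF : LipschitzOnWith K F (Set.Icc (-1) 1)) (hκ : κ < m)
    (ht : t ∈ Set.Icc 0 π) (htκ : |t - chebAngle m κ| ≤ π / (2 * m)) :
    |∑ i ∈ Finset.range m, F (cos (chebAngle m i)) * lagBasis m (i + 1) (cos t) - F (cos t)| ≤
      5 * K * π * ((1 + log m) / m) := by
  have h := abs_sum_mul_comp_cos_chebAngle_sub_le zero_le_one hF hκ htκ
    (sum_range_lagBasis (Nat.ne_zero_of_lt hκ) (cos t)) fun n hn =>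
      (abs_sum_range_lagBasis_sub_step_le hκ hn ht htκ).trans_eq (one_mul _).symm
  exact h.trans_eq (by ring)

theorem abs_sum_mul_sq_sub_sq_lagBasis_sub_le (hF : LipschitzOnWith K F (Set.Icc (-1) 1))
    (hκ : κ < m) (ht : t ∈ Set.Icc 0 π) (htκ : |t - chebAngle m κ| ≤ π / (2 * m)) :
    |∑ i ∈ Finset.range m, F (cos (chebAngle m i)) *
        ((∑ j ∈ Finset.range (i + 1), lagBasis m (j + 1) (cos t)) ^ 2 -
          (∑ j ∈ Finset.range i, lagBasis m (j + 1) (cos t)) ^ 2) - F (cos t)| ≤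
      17 * K * π * ((1 + log m) / m) := by
  set p : ℕ → ℝ := fun n => (∑ j ∈ Finset.range n, lagBasis m (j + 1) (cos t)) ^ 2 with hp
  have htelescope (n : ℕ) : ∑ i ∈ Finset.range n, (p (i + 1) - p i) = p n := by
    rw [Finset.sum_range_sub]
    simp [hp]
  have htotal : p m = 1 := by
    simp only [hp]
    rw [sum_range_lagBasis (Nat.ne_zero_of_lt hκ), one_pow]
  have h := abs_sum_mul_comp_cos_chebAngle_sub_le (w := fun i => p (i + 1) - p i) zero_le_four hF
    hκ htκ ((htelescope m).trans htotal) fun n hn => by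
      rw [htelescope]
      exact abs_sq_sum_range_lagBasis_sub_step_le hκ hn ht htκ
  exact h.trans_eq (by ring)

theorem sum_sum_varianceKernel_eq (hF : MonotoneOn F (Set.Icc (-1) 1)) (w : ℕ → ℝ) :
    ∑ j ∈ Finset.Icc 1 m, ∑ l ∈ Finset.Icc 1 m,
        (min (F (chebNode m j)) (F (chebNode m l)) - F (chebNode m j) * F (chebNode m l)) *
          w j * w l =
      ∑ i ∈ Finset.range m, F (cos (chebAngle m i)) *
          ((∑ j ∈ Finset.range (i + 1), w (j + 1)) ^ 2 -
            (∑ j ∈ Finset.range i, w (j + 1)) ^ 2) -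
        (∑ i ∈ Finset.range m, F (cos (chebAngle m i)) * w (i + 1)) ^ 2 := by
  have hanti : AntitoneOn (fun i => F (cos (chebAngle m i))) (Set.Iio m) := fun i hi j hj hij =>
    hF (cos_mem_Icc _) (cos_mem_Icc _) (cos_le_cos_of_nonneg_of_le_pi (chebAngle_mem_Ioo hi).1.le
      (chebAngle_mem_Ioo hj).2.le (monotone_chebAngle m hij))
  simp only [sum_Icc_one_eq_sum_range, chebNode_succ]
  rw [← sum_sum_max_mul_mul, sq, Finset.sum_mul_sum, ← Finset.sum_sub_distrib]
  refine Finset.sum_congr rfl fun i hi => ?_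
  rw [← Finset.sum_sub_distrib]
  refine Finset.sum_congr rfl fun j hj => ?_
  rw [hanti.map_max (Finset.mem_range.1 hi) (Finset.mem_range.1 hj)]
  ring

theorem variance_kernel_double_sum_approx_general (hmono : MonotoneOn F (Set.Icc (-1) 1))
    (hF : LipschitzOnWith K F (Set.Icc (-1) 1)) :
    ∃ C > 0, ∀ m : ℕ, 1 ≤ m → ∀ x ∈ Set.Icc (-1 : ℝ) 1,
      |(∑ j ∈ Finset.Icc 1 m, ∑ l ∈ Finset.Icc 1 m,
          (min (F (chebNode m j)) (F (chebNode m l)) - F (chebNode m j) * F (chebNode m l)) *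
            lagBasis m j x * lagBasis m l x) - F x * (1 - F x)| ≤ C * ((1 + log m) / m) := by
  set B := |F 0| + K
  have hbound (y : ℝ) (hy : y ∈ Set.Icc (-1 : ℝ) 1) : |F y| ≤ B := by
    have hdist := hF.dist_le_mul y hy 0 ⟨by norm_num, by norm_num⟩
    rw [dist_eq, dist_eq, sub_zero] at hdist
    calc |F y| ≤ |F 0| + |F y - F 0| := by linarith [abs_sub_abs_le_abs_sub (F y) (F 0)]
      _ ≤ |F 0| + K * 1 := by gcongr; exact hdist.trans (by gcongr; exact abs_le.2 hy)
      _ = B := by rw [mul_one]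
  refine ⟨17 * K * π + 5 * K * π * (2 * B + 5 * K * π) + 1, by positivity, fun m hm x hx => ?_⟩
  have hm' : (0 : ℝ) < m := Nat.cast_pos.2 hm
  have ht : arccos x ∈ Set.Icc 0 π := ⟨arccos_nonneg x, arccos_le_pi x⟩
  obtain ⟨κ, hκ, htκ⟩ := exists_abs_sub_chebAngle_le (Nat.pos_iff_ne_zero.1 hm) ht
  have hsq := abs_sum_mul_sq_sub_sq_lagBasis_sub_le hF hκ ht htκ
  have hlin := abs_sum_mul_lagBasis_sub_le hF hκ ht htκ
  rw [cos_arccos hx.1 hx.2] at hsq hlin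
  have hrate : (1 + log m) / m ≤ 1 := by
    rw [div_le_one hm']
    linarith [log_le_sub_one_of_pos hm']
  rw [sum_sum_varianceKernel_eq hmono fun j => lagBasis m j x]
  refine (abs_sub_sq_sub_mul_one_sub_le hsq hlin (hbound x hx) (by positivity) hrate).trans ?_
  gcongr ?_ * _
  exact le_add_of_nonneg_right zero_le_one

end VarianceKernel

/-- Uniform `O(m^{−1/2})` approximation of the limiting variance `F(x)(1−F(x))` by the
double Lagrange–Chebyshev sum of the covariance kernel `min(F(x_j),F(x_l)) − F(x_j)F(x_l)`. -/
theorem variance_kernel_double_sum_approx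
    (F : ℝ → ℝ)
    (hmono : MonotoneOn F (Set.Icc (-1 : ℝ) 1))
    (hrange : ∀ x ∈ Set.Icc (-1 : ℝ) 1, F x ∈ Set.Icc (0 : ℝ) 1)
    (hF : ContDiffOn ℝ 2 F (Set.Icc (-1 : ℝ) 1))
    (hbd : ∃ M : ℝ, ∀ x ∈ Set.Icc (-1 : ℝ) 1,
      |deriv F x| ≤ M ∧ |deriv (deriv F) x| ≤ M) :
    ∃ C > 0, ∀ m : ℕ, 1 ≤ m → ∀ x ∈ Set.Icc (-1 : ℝ) 1,
      |(∑ j ∈ Finset.Icc 1 m, ∑ l ∈ Finset.Icc 1 m,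
          (min (F (chebNode m j)) (F (chebNode m l)) - F (chebNode m j) * F (chebNode m l)) *
            lagBasis m j x * lagBasis m l x) - F x * (1 - F x)| ≤ C / Real.sqrt m := by
  obtain ⟨K, hK⟩ := hF.exists_lipschitzOnWith two_ne_zero (convex_Icc _ _) isCompact_Icc
  obtain ⟨C, hC, hbound⟩ := variance_kernel_double_sum_approx_general hmono hK
  refine ⟨C * 2, by positivity, fun m hm x hx => (hbound m hm x hx).trans ?_⟩
  rw [mul_div_assoc]
  exact mul_le_mul_of_nonneg_left (one_add_log_div_le_two_div_sqrt (Nat.cast_pos.2 hm)) hC.le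
end
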